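/- Let A = (1, a_y, a_z) and B = (b_x, 1, b_z) be points of X. Then there exists a point C = (1, 1, z) with z ∈ [−1,1] such that ‖A − C‖∞ + ‖C − B‖∞ equals the geodesic distance d(A,B) (i.e., there is a shortest path from A to B consisting of at most two line segments through the edge {(1,1,z) : |z| ≤ 1}) if and only if at least one of the following four conditions holds: (1) |a_z| ≤ a_y; (2) |b_z| ≤ b_x; (3) |a_y| ≤ a_z and |b_x| ≤ −b_z; (4) |a_y| ≤ −a_z and |b_x| ≤ b_z. -/

import Mathlib

open Set
open scoped ENNReal

/-- The geodesic distance between two points on the unit sphere (for the sup norm)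
of `Fin n → ℝ`: the infimum over continuous paths `γ : [0,1] → {x : ‖x‖ = 1}` joining
them of the length of `γ`, i.e. its total variation. -/
noncomputable def geoDist {n : ℕ} (A B : Fin n → ℝ) : ℝ≥0∞ :=
  ⨅ (γ : ℝ → (Fin n → ℝ)) (_ : ContinuousOn γ (Icc 0 1)) (_ : γ 0 = A)
    (_ : γ 1 = B) (_ : ∀ t ∈ Icc (0:ℝ) 1, ‖γ t‖ = 1),
    eVariationOn γ (Icc 0 1)

/-!
Choosing the crossing height well, the cheapest route from `A` to `B` through the edge
`{(1, 1, z)}` has length `max (2 - ay - bx) |az - bz|`. As `|az - bz| ≤ d(A, B)` always holds, the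
edge carries a shortest path if and only if `2 - ay - bx ≤ d(A, B)`.

If `ay < az` and `bx < bz`, a detour over the facet `z = 1` is strictly shorter than
`2 - ay - bx`; if `ay < -az` and `bx < -bz`, so is its mirror image over `z = -1`. One of these
cases occurs whenever all four conditions fail.

For the converse, a function that is 1-Lipschitz on each facet changes by at most `d(A, B)` between
`A` and `B`. Under conditions (1) and (2) one uses the largest absolute value of the other
coordinates minus one coordinate; under (3) and (4), after a reflection, the sum of the largest and
the smallest coordinate.
-/

section Variation

/-- The path running through `f` on `[0, 1/2]` and then through `g` on `[1/2, 1]`, both at double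
speed. -/
noncomputable def concatPath {E : Type*} (f g : ℝ → E) (t : ℝ) : E :=
  if t ≤ 1 / 2 then f (2 * t) else g (2 * t - 1)

lemma concatPath_eqOn_left {E : Type*} (f g : ℝ → E) :
    EqOn (concatPath f g) (f ∘ fun t => 2 * t) (Icc 0 (1 / 2)) :=
  fun _ ht => if_pos ht.2

lemma concatPath_eqOn_right {E : Type*} {f g : ℝ → E} (hfg : f 1 = g 0) :
    EqOn (concatPath f g) (g ∘ fun t => 2 * t - 1) (Icc (1 / 2) 1) := by
  intro t ht
  rcases ht.1.eq_or_lt with rfl | h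
  · simp [concatPath, hfg]
  · exact if_neg h.not_ge

lemma image_two_mul_Icc : (fun t : ℝ => 2 * t) '' Icc 0 (1 / 2) = Icc 0 1 := by
  rw [image_mul_left_Icc' two_pos]
  norm_num

lemma image_two_mul_sub_one_Icc : (fun t : ℝ => 2 * t - 1) '' Icc (1 / 2) 1 = Icc 0 1 := by
  simp only [sub_eq_add_neg]
  rw [image_affine_Icc' two_pos]
  norm_num

lemma eVariationOn_Icc_add_Icc {α E : Type*} [LinearOrder α] [PseudoEMetricSpace E] (f : α → E)
    {a b c : α} (hab : a ≤ b) (hbc : b ≤ c) :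
    eVariationOn f (Icc a b) + eVariationOn f (Icc b c) = eVariationOn f (Icc a c) := by
  simpa only [univ_inter] using eVariationOn.Icc_add_Icc f hab hbc (mem_univ b)

lemma eVariationOn_concatPath {E : Type*} [PseudoEMetricSpace E] {f g : ℝ → E}
    (hfg : f 1 = g 0) : eVariationOn (concatPath f g) (Icc 0 1) =
      eVariationOn f (Icc 0 1) + eVariationOn g (Icc 0 1) := by
  have hleft : MonotoneOn (fun t : ℝ => 2 * t) (Icc 0 (1 / 2)) :=
    fun _ _ _ _ h => by simpa using h
  have hright : MonotoneOn (fun t : ℝ => 2 * t - 1) (Icc (1 / 2) 1) :=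
    fun _ _ _ _ h => by simpa using h
  rw [← eVariationOn_Icc_add_Icc _ (b := 1 / 2) (by norm_num) (by norm_num),
    eVariationOn.congr (concatPath_eqOn_left f g), eVariationOn.congr (concatPath_eqOn_right hfg),
    eVariationOn.comp_eq_of_monotoneOn _ _ hleft, eVariationOn.comp_eq_of_monotoneOn _ _ hright,
    image_two_mul_Icc, image_two_mul_sub_one_Icc]

lemma continuousOn_concatPath {E : Type*} [TopologicalSpace E] {f g : ℝ → E}
    (hf : ContinuousOn f (Icc 0 1)) (hg : ContinuousOn g (Icc 0 1)) (hfg : f 1 = g 0) :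
    ContinuousOn (concatPath f g) (Icc 0 1) := by
  have hleft : ContinuousOn (concatPath f g) (Icc 0 (1 / 2)) :=
    (hf.comp (by fun_prop) (mapsTo_iff_image_subset.2 image_two_mul_Icc.subset)).congr
      (concatPath_eqOn_left f g)
  have hright : ContinuousOn (concatPath f g) (Icc (1 / 2) 1) :=
    (hg.comp (by fun_prop) (mapsTo_iff_image_subset.2 image_two_mul_sub_one_Icc.subset)).congr
      (concatPath_eqOn_right hfg)
  rw [← Icc_union_Icc_eq_Icc (b := (1 / 2 : ℝ)) (by norm_num) (by norm_num)]
  exact hleft.union_of_isClosed hright isClosed_Icc isClosed_Icc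

lemma eVariationOn_comp_le_mul {α E E' : Type*} [LinearOrder α] [PseudoEMetricSpace E]
    [PseudoEMetricSpace E'] {K : NNReal} {f : E → E'} (hf : LipschitzWith K f) (g : α → E)
    (s : Set α) : eVariationOn (f ∘ g) s ≤ K * eVariationOn g s :=
  (hf.lipschitzOnWith (s := univ)).comp_eVariationOn_le (mapsTo_univ g s)

lemma eVariationOn_lineMap_Icc_le {E : Type*} [SeminormedAddCommGroup E] [NormedSpace ℝ E]
    (A B : E) : eVariationOn (AffineMap.lineMap A B : ℝ → E) (Icc 0 1) ≤ edist A B := by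
  have hid : eVariationOn (id : ℝ → ℝ) (Icc 0 1) = 1 := by
    have h := (monotone_id.monotoneOn (Icc (0 : ℝ) 1)).eVariationOn_eq
      (left_mem_Icc.2 zero_le_one) (right_mem_Icc.2 zero_le_one)
    simpa only [inter_self, id_eq, sub_zero, ENNReal.ofReal_one] using h
  calc eVariationOn (AffineMap.lineMap A B ∘ id) (Icc (0 : ℝ) 1)
      ≤ nndist A B * eVariationOn (id : ℝ → ℝ) (Icc 0 1) :=
        eVariationOn_comp_le_mul (lipschitzWith_lineMap A B) _ _
    _ = edist A B := by rw [hid, mul_one, edist_nndist]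

lemma exists_last_mem {α E : Type*} [ConditionallyCompleteLinearOrder α] [TopologicalSpace α]
    [OrderTopology α] [TopologicalSpace E] {γ : α → E} {a b : α} {F : Set E} (hF : IsClosed F)
    (hγ : ContinuousOn γ (Icc a b)) (hab : a ≤ b) (ha : γ a ∈ F) :
    ∃ t ∈ Icc a b, γ t ∈ F ∧ ∀ s ∈ Ioc t b, γ s ∉ F := by
  have hclosed : IsClosed (Icc a b ∩ γ ⁻¹' F) := hγ.preimage_isClosed_of_isClosed isClosed_Icc hF
  obtain ⟨t, ⟨htab, htF⟩, hmax⟩ :=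
    (isCompact_Icc.of_isClosed_subset hclosed inter_subset_left).exists_isGreatest
      ⟨a, left_mem_Icc.2 hab, ha⟩
  exact ⟨t, htab, htF, fun s hs hsF =>
    hs.1.not_ge (hmax ⟨⟨htab.1.trans hs.1.le, hs.2⟩, hsF⟩)⟩

lemma mapsTo_Icc_of_mapsTo_Ioc {α E : Type*} [TopologicalSpace α] [LinearOrder α]
    [OrderTopology α] [DenselyOrdered α] [TopologicalSpace E] {γ : α → E} {a b : α} {U : Set E}
    (hU : IsClosed U) (hγ : ContinuousOn γ (Icc a b)) (hab : a < b)
    (h : MapsTo γ (Ioc a b) U) : MapsTo γ (Icc a b) U := by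
  rw [← closure_Ioc hab.ne] at hγ ⊢
  simpa only [hU.closure_eq] using h.closure_of_continuousOn hγ

/- Jump to the last time spent in the current set: after it that set is never needed again, so
the number of sets drops. -/
lemma edist_comp_le_mul_eVariationOn {α E E' ι : Type*} [ConditionallyCompleteLinearOrder α]
    [TopologicalSpace α] [OrderTopology α] [DenselyOrdered α] [PseudoEMetricSpace E]
    [PseudoEMetricSpace E'] {K : NNReal} {F : ι → Set E} (S : Finset ι) {φ : E → E'} {γ : α → E}
    {a b : α} (hF : ∀ i ∈ S, IsClosed (F i)) (hφ : ∀ i ∈ S, LipschitzOnWith K φ (F i))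
    (hab : a ≤ b) (hγ : ContinuousOn γ (Icc a b)) (hcov : MapsTo γ (Icc a b) (⋃ i ∈ S, F i)) :
    edist (φ (γ a)) (φ (γ b)) ≤ K * eVariationOn γ (Icc a b) := by
  classical
  induction S using Finset.strongInduction generalizing a with
  | H S ih =>
    obtain ⟨i, hiS, hai⟩ := mem_iUnion₂.1 (hcov (left_mem_Icc.2 hab))
    obtain ⟨t, ⟨hat, htb⟩, hti, hlast⟩ := exists_last_mem (hF i hiS) hγ hab hai
    have huntil : edist (φ (γ a)) (φ (γ t)) ≤ K * eVariationOn γ (Icc a t) :=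
      (hφ i hiS hai hti).trans <| by
        gcongr
        exact eVariationOn.edist_le γ (left_mem_Icc.2 hat) (right_mem_Icc.2 hat)
    have hafter : edist (φ (γ t)) (φ (γ b)) ≤ K * eVariationOn γ (Icc t b) := by
      rcases htb.eq_or_lt with rfl | htb'
      · simp
      have hγt : ContinuousOn γ (Icc t b) := hγ.mono (Icc_subset_Icc_left hat)
      have hSi : ∀ j ∈ S.erase i, j ∈ S := fun _ => Finset.mem_of_mem_erase
      refine ih (S.erase i) (Finset.erase_ssubset hiS) (fun j hj => hF j (hSi j hj))
        (fun j hj => hφ j (hSi j hj)) htb hγt (mapsTo_Icc_of_mapsTo_Ioc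
          (isClosed_biUnion_finset fun j hj => hF j (hSi j hj)) hγt htb' fun s hs => ?_)
      obtain ⟨j, hjS, hsj⟩ := mem_iUnion₂.1 (hcov ⟨hat.trans hs.1.le, hs.2⟩)
      have hji : j ≠ i := by
        rintro rfl
        exact hlast s hs hsj
      exact mem_iUnion₂.2 ⟨j, Finset.mem_erase.2 ⟨hji, hjS⟩, hsj⟩
    calc edist (φ (γ a)) (φ (γ b))
        ≤ edist (φ (γ a)) (φ (γ t)) + edist (φ (γ t)) (φ (γ b)) := edist_triangle _ _ _
      _ ≤ K * eVariationOn γ (Icc a t) + K * eVariationOn γ (Icc t b) := add_le_add huntil hafter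
      _ = K * eVariationOn γ (Icc a b) := by rw [← mul_add, eVariationOn_Icc_add_Icc γ hat htb]

end Variation

section GeodesicDistance

variable {m n : ℕ} {A B C : Fin n → ℝ}

/-- The paths competing in the definition of `geoDist A B`: continuous on `[0, 1]`, from `A` to `B`,
within the unit sphere. Values outside `[0, 1]` are irrelevant. -/
structure IsSpherePath (A B : Fin n → ℝ) (γ : ℝ → Fin n → ℝ) : Prop where
  continuousOn : ContinuousOn γ (Icc 0 1)
  source : γ 0 = A
  target : γ 1 = B
  norm_eq_one : ∀ t ∈ Icc (0 : ℝ) 1, ‖γ t‖ = 1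

lemma geoDist_eq_iInf (A B : Fin n → ℝ) :
    geoDist A B = ⨅ γ : {γ // IsSpherePath A B γ}, eVariationOn γ.1 (Icc 0 1) := by
  refine le_antisymm (le_iInf fun ⟨γ, hγ⟩ => ?_) ?_
  · exact iInf_le_of_le γ <| iInf_le_of_le hγ.continuousOn <| iInf_le_of_le hγ.source <|
      iInf_le_of_le hγ.target <| iInf_le_of_le hγ.norm_eq_one le_rfl
  · exact le_iInf fun γ => le_iInf fun hc => le_iInf fun h0 => le_iInf fun h1 => le_iInf fun hn =>
      iInf_le_of_le ⟨γ, hc, h0, h1, hn⟩ le_rfl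

lemma le_geoDist_iff {r : ℝ≥0∞} :
    r ≤ geoDist A B ↔ ∀ γ, IsSpherePath A B γ → r ≤ eVariationOn γ (Icc 0 1) := by
  rw [geoDist_eq_iInf, le_iInf_iff, Subtype.forall]

lemma IsSpherePath.geoDist_le {γ : ℝ → Fin n → ℝ} (hγ : IsSpherePath A B γ) :
    geoDist A B ≤ eVariationOn γ (Icc 0 1) :=
  le_geoDist_iff.1 le_rfl γ hγ

lemma IsSpherePath.trans {f g : ℝ → Fin n → ℝ} (hf : IsSpherePath A B f)
    (hg : IsSpherePath B C g) : IsSpherePath A C (concatPath f g) where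
  continuousOn := continuousOn_concatPath hf.continuousOn hg.continuousOn
    (hf.target.trans hg.source.symm)
  source := by simp [concatPath, hf.source]
  target := by norm_num [concatPath, hg.target]
  norm_eq_one t ht := by
    unfold concatPath
    split_ifs with h
    · exact hf.norm_eq_one _ ⟨by linarith [ht.1], by linarith⟩
    · exact hg.norm_eq_one _ ⟨by linarith, by linarith [ht.2]⟩

lemma geoDist_triangle (A B C : Fin n → ℝ) : geoDist A C ≤ geoDist A B + geoDist B C := by
  rw [geoDist_eq_iInf A B, geoDist_eq_iInf B C]
  simp_rw [ENNReal.iInf_add, ENNReal.add_iInf]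
  refine le_iInf₂ fun ⟨f, hf⟩ ⟨g, hg⟩ => ?_
  rw [← eVariationOn_concatPath (hf.target.trans hg.source.symm)]
  exact (hf.trans hg).geoDist_le

lemma geoDist_comm (A B : Fin n → ℝ) : geoDist A B = geoDist B A := by
  suffices h : ∀ A B : Fin n → ℝ, geoDist A B ≤ geoDist B A from le_antisymm (h A B) (h B A)
  refine fun A B => le_geoDist_iff.2 fun γ hγ => ?_
  have hmaps : MapsTo (fun t : ℝ => 1 - t) (Icc 0 1) (Icc 0 1) :=
    fun t ht => ⟨by linarith [ht.2], by linarith [ht.1]⟩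
  have hrev : IsSpherePath A B (γ ∘ fun t => 1 - t) :=
    ⟨hγ.continuousOn.comp (by fun_prop) hmaps, by simp [hγ.target], by simp [hγ.source],
      fun t ht => hγ.norm_eq_one _ (hmaps ht)⟩
  exact hrev.geoDist_le.trans
    (eVariationOn.comp_le_of_antitoneOn γ _ (fun _ _ _ _ h => by linarith) hmaps)

lemma geoDist_map_le (f : (Fin n → ℝ) →ₗᵢ[ℝ] (Fin m → ℝ)) (A B : Fin n → ℝ) :
    geoDist (f A) (f B) ≤ geoDist A B := by
  refine le_geoDist_iff.2 fun γ hγ => ?_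
  have hfγ : IsSpherePath (f A) (f B) (f ∘ γ) :=
    ⟨f.continuous.comp_continuousOn hγ.continuousOn, congrArg f hγ.source,
      congrArg f hγ.target, fun t ht => (f.norm_map _).trans (hγ.norm_eq_one t ht)⟩
  refine hfγ.geoDist_le.trans ?_
  simpa only [ENNReal.coe_one, one_mul] using eVariationOn_comp_le_mul f.lipschitz γ (Icc 0 1)

lemma edist_le_geoDist (A B : Fin n → ℝ) : edist A B ≤ geoDist A B := by
  refine le_geoDist_iff.2 fun γ hγ => ?_
  simpa only [hγ.source, hγ.target] using
    eVariationOn.edist_le γ (left_mem_Icc.2 zero_le_one) (right_mem_Icc.2 (zero_le_one' ℝ))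

lemma geoDist_eq_edist_of_segment_subset (h : segment ℝ A B ⊆ Metric.sphere 0 1) :
    geoDist A B = edist A B := by
  have hline : IsSpherePath A B (AffineMap.lineMap A B : ℝ → Fin n → ℝ) :=
    ⟨AffineMap.lineMap_continuous.continuousOn, by simp, by simp, fun t ht =>
      mem_sphere_zero_iff_norm.1 (h (segment_eq_image_lineMap ℝ A B ▸ mem_image_of_mem _ ht))⟩
  exact le_antisymm (hline.geoDist_le.trans (eVariationOn_lineMap_Icc_le A B))
    (edist_le_geoDist A B)

end GeodesicDistance

section Cube

variable {n : ℕ} {i j : Fin n} {s : ℝ} {A B P Q : Fin n → ℝ}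

/-- For `s = ±1`, the facet of the cube `[-1, 1]ⁿ` on which the `i`-th coordinate equals `s`; the
geodesics of the sphere are studied facet by facet. -/
def cubeFacet (i : Fin n) (s : ℝ) : Set (Fin n → ℝ) :=
  {v | ‖v‖ ≤ 1 ∧ v i = s}

lemma isClosed_cubeFacet (i : Fin n) (s : ℝ) : IsClosed (cubeFacet i s) :=
  (isClosed_le continuous_norm continuous_const).inter
    (isClosed_eq (continuous_apply i) continuous_const)

lemma convex_cubeFacet (i : Fin n) (s : ℝ) : Convex ℝ (cubeFacet i s) := by
  have hball : Convex ℝ {v : Fin n → ℝ | ‖v‖ ≤ 1} := by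
    simpa only [Metric.closedBall, dist_zero_right] using convex_closedBall (0 : Fin n → ℝ) 1
  have hplane : Convex ℝ {v : Fin n → ℝ | v i = s} :=
    convex_hyperplane (LinearMap.proj (R := ℝ) (φ := fun _ => ℝ) i).isLinear s
  exact hball.inter hplane

lemma abs_apply_le_one_of_mem_cubeFacet (hP : P ∈ cubeFacet i s) (k : Fin n) : |P k| ≤ 1 :=
  (norm_le_pi_norm P k).trans hP.1

lemma cubeFacet_subset_sphere (hs : |s| = 1) : cubeFacet i s ⊆ Metric.sphere 0 1 := by
  rintro v ⟨hv, rfl⟩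
  exact mem_sphere_zero_iff_norm.2 (hv.antisymm (hs ▸ norm_le_pi_norm v i))

lemma exists_mem_cubeFacet_of_norm_eq_one {v : Fin n → ℝ} (hv : ‖v‖ = 1) :
    ∃ i, ∃ s ∈ ({1, -1} : Finset ℝ), v ∈ cubeFacet i s := by
  have : Nonempty (Fin n) := by
    by_contra! h
    simp [Subsingleton.elim v 0] at hv
  obtain ⟨i, hi⟩ := Finite.exists_max fun i => ‖v i‖
  have hvi : |v i| = 1 :=
    le_antisymm (hv ▸ norm_le_pi_norm v i) (hv ▸ (pi_norm_le_iff_of_nonneg (norm_nonneg _)).2 hi)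
  exact ⟨i, v i, by simpa using eq_or_eq_neg_of_abs_eq hvi, hv.le, rfl⟩

lemma geoDist_eq_ofReal_norm_of_mem_cubeFacet (hs : |s| = 1) (hA : A ∈ cubeFacet i s)
    (hB : B ∈ cubeFacet i s) : geoDist A B = ENNReal.ofReal ‖A - B‖ := by
  rw [geoDist_eq_edist_of_segment_subset
    (((convex_cubeFacet i s).segment_subset hA hB).trans (cubeFacet_subset_sphere hs)),
    edist_dist, dist_eq_norm]

lemma ofReal_sub_le_geoDist {φ : (Fin n → ℝ) → ℝ}
    (hφ : ∀ i s, |s| = 1 → LipschitzOnWith 1 φ (cubeFacet i s)) (A B : Fin n → ℝ) :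
    ENNReal.ofReal (φ B - φ A) ≤ geoDist A B := by
  refine le_geoDist_iff.2 fun γ hγ => ?_
  have hcov : MapsTo γ (Icc 0 1) (⋃ p ∈ Finset.univ ×ˢ ({1, -1} : Finset ℝ),
      cubeFacet p.1 p.2) := by
    intro t ht
    obtain ⟨i, s, hs, hγt⟩ := exists_mem_cubeFacet_of_norm_eq_one (hγ.norm_eq_one t ht)
    exact mem_iUnion₂.2 ⟨(i, s), Finset.mk_mem_product (Finset.mem_univ i) hs, hγt⟩
  have hsign : ∀ s ∈ ({1, -1} : Finset ℝ), |s| = 1 := by simp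
  have hlength := edist_comp_le_mul_eVariationOn _ (fun p _ => isClosed_cubeFacet p.1 p.2)
    (fun p hp => hφ p.1 p.2 (hsign _ (Finset.mem_product.1 hp).2)) zero_le_one
    hγ.continuousOn hcov
  rw [hγ.source, hγ.target, ENNReal.coe_one, one_mul, edist_comm, edist_dist, Real.dist_eq]
    at hlength
  exact (ENNReal.ofReal_le_ofReal (le_abs_self _)).trans hlength

lemma sub_apply_le_norm_sub (P Q : Fin n → ℝ) (k : Fin n) : P k - Q k ≤ ‖P - Q‖ :=
  (le_abs_self _).trans (norm_le_pi_norm (P - Q) k)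

lemma norm_removeNth_le (i : Fin (n + 1)) (P : Fin (n + 1) → ℝ) : ‖i.removeNth P‖ ≤ ‖P‖ :=
  (pi_norm_le_iff_of_nonneg (norm_nonneg P)).2 fun _ => norm_le_pi_norm P _

lemma norm_removeNth_eq_one_of_mem_cubeFacet {i j : Fin (n + 1)} {P : Fin (n + 1) → ℝ} (hij : j ≠ i)
    (hs : |s| = 1) (hP : P ∈ cubeFacet j s) : ‖i.removeNth P‖ = 1 := by
  obtain ⟨k, rfl⟩ := Fin.exists_succAbove_eq hij
  refine ((norm_removeNth_le i P).trans hP.1).antisymm ?_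
  calc (1 : ℝ) = |i.removeNth P k| := by rw [Fin.removeNth_apply, hP.2, hs]
    _ ≤ ‖i.removeNth P‖ := norm_le_pi_norm (i.removeNth P) k

/- On the facets where `P i` is constant only the norm varies, on all others only `P i` does. -/
lemma lipschitzOnWith_norm_removeNth_sub (i j : Fin (n + 1)) (hs : |s| = 1) :
    LipschitzOnWith 1 (fun P : Fin (n + 1) → ℝ => ‖i.removeNth P‖ - P i) (cubeFacet j s) := by
  refine LipschitzOnWith.of_le_add fun P hP Q hQ => ?_
  rw [dist_eq_norm]
  by_cases hij : j = i
  · subst hij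
    have h : ‖j.removeNth P‖ - ‖j.removeNth Q‖ ≤ ‖P - Q‖ :=
      (norm_sub_norm_le _ _).trans (norm_removeNth_le j (P - Q))
    rw [hP.2, hQ.2]
    linarith
  · rw [norm_removeNth_eq_one_of_mem_cubeFacet hij hs hP,
      norm_removeNth_eq_one_of_mem_cubeFacet hij hs hQ, norm_sub_rev]
    linarith [sub_apply_le_norm_sub Q P i]

lemma iSup_le_iSup_add_norm_sub [NeZero n] (P Q : Fin n → ℝ) :
    ⨆ k, P k ≤ (⨆ k, Q k) + ‖P - Q‖ :=
  ciSup_le fun k => by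
    linarith [sub_apply_le_norm_sub P Q k, le_ciSup (finite_range Q).bddAbove k]

lemma iInf_le_iInf_add_norm_sub [NeZero n] (P Q : Fin n → ℝ) :
    ⨅ k, P k ≤ (⨅ k, Q k) + ‖P - Q‖ := by
  rw [← sub_le_iff_le_add]
  exact le_ciInf fun k => by
    linarith [sub_apply_le_norm_sub P Q k, ciInf_le (finite_range P).bddBelow k]

lemma iSup_eq_of_forall_le {P : Fin n → ℝ} (h : ∀ k, P k ≤ P i) : ⨆ k, P k = P i :=
  IsGreatest.csSup_eq ⟨mem_range_self i, forall_mem_range.2 h⟩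

lemma iInf_eq_of_forall_le {P : Fin n → ℝ} (h : ∀ k, P i ≤ P k) : ⨅ k, P k = P i :=
  IsLeast.csInf_eq ⟨mem_range_self i, forall_mem_range.2 h⟩

lemma iSup_eq_one_of_mem_cubeFacet (hP : P ∈ cubeFacet i 1) : ⨆ k, P k = 1 :=
  (iSup_eq_of_forall_le fun k =>
    hP.2 ▸ (abs_le.1 (abs_apply_le_one_of_mem_cubeFacet hP k)).2).trans hP.2

lemma iInf_eq_neg_one_of_mem_cubeFacet (hP : P ∈ cubeFacet i (-1)) : ⨅ k, P k = -1 :=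
  (iInf_eq_of_forall_le fun k =>
    hP.2 ▸ (abs_le.1 (abs_apply_le_one_of_mem_cubeFacet hP k)).1).trans hP.2

/- On every facet either the supremum is constantly `1` or the infimum is constantly `-1`. -/
lemma lipschitzOnWith_iSup_add_iInf (i : Fin n) (hs : |s| = 1) :
    LipschitzOnWith 1 (fun P : Fin n → ℝ => (⨆ k, P k) + ⨅ k, P k) (cubeFacet i s) := by
  have : NeZero n := ⟨i.pos.ne'⟩
  refine LipschitzOnWith.of_le_add fun P hP Q hQ => ?_
  rw [dist_eq_norm]
  rcases eq_or_eq_neg_of_abs_eq hs with rfl | rfl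
  · rw [iSup_eq_one_of_mem_cubeFacet hP, iSup_eq_one_of_mem_cubeFacet hQ]
    linarith [iInf_le_iInf_add_norm_sub P Q]
  · rw [iInf_eq_neg_one_of_mem_cubeFacet hP, iInf_eq_neg_one_of_mem_cubeFacet hQ]
    linarith [iSup_le_iSup_add_norm_sub P Q]

lemma two_sub_apply_sub_apply_le_geoDist {i j : Fin (n + 1)} {A B : Fin (n + 1) → ℝ} (hij : i ≠ j)
    (hA : A i = 1) (hAj : ∀ k ≠ i, |A k| ≤ A j) (hB : B ∈ cubeFacet j 1) :
    ENNReal.ofReal (2 - A j - B i) ≤ geoDist A B := by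
  have hnormA : ‖i.removeNth A‖ ≤ A j :=
    (pi_norm_le_iff_of_nonneg ((abs_nonneg _).trans (hAj j hij.symm))).2 fun k =>
      hAj _ (Fin.succAbove_ne i k)
  have hnormB : ‖i.removeNth B‖ = 1 := norm_removeNth_eq_one_of_mem_cubeFacet hij.symm abs_one hB
  refine le_trans (ENNReal.ofReal_le_ofReal ?_)
    (ofReal_sub_le_geoDist (fun j s => lipschitzOnWith_norm_removeNth_sub i j) A B)
  linarith

lemma two_add_apply_sub_apply_le_geoDist (hA : A ∈ cubeFacet i 1) (hAj : ∀ k, A j ≤ A k)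
    (hB : B ∈ cubeFacet j (-1)) (hBi : ∀ k, B k ≤ B i) :
    ENNReal.ofReal (2 + A j - B i) ≤ geoDist A B := by
  have h := ofReal_sub_le_geoDist (fun j s => lipschitzOnWith_iSup_add_iInf j) B A
  rw [iSup_eq_one_of_mem_cubeFacet hA, iInf_eq_of_forall_le hAj, iSup_eq_of_forall_le hBi,
    iInf_eq_neg_one_of_mem_cubeFacet hB, geoDist_comm] at h
  exact le_trans (ENNReal.ofReal_le_ofReal (by linarith)) h

/-- The reflection of `Fin n → ℝ` negating the `i`-th coordinate. These symmetries of the cube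
transport an estimate at one facet to another. -/
def coordReflection (i : Fin n) : (Fin n → ℝ) →ₗᵢ[ℝ] (Fin n → ℝ) where
  toLinearMap := LinearMap.pi fun k => (if k = i then -1 else 1 : ℝ) • LinearMap.proj k
  norm_map' v := by
    simp only [Pi.norm_def]
    congr 2 with k
    by_cases hk : k = i <;> simp [hk]

lemma coordReflection_apply (i : Fin n) (v : Fin n → ℝ) (k : Fin n) :
    coordReflection i v k = if k = i then -v k else v k := by
  by_cases hk : k = i <;> simp [coordReflection, hk]

lemma coordReflection_involutive (i : Fin n) : Function.Involutive (coordReflection i) := by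
  intro v
  ext k
  by_cases hk : k = i <;> simp [coordReflection_apply, hk]

lemma geoDist_coordReflection (i : Fin n) (A B : Fin n → ℝ) :
    geoDist (coordReflection i A) (coordReflection i B) = geoDist A B := by
  refine (geoDist_map_le _ A B).antisymm ?_
  simpa only [coordReflection_involutive i _] using
    geoDist_map_le (coordReflection i) (coordReflection i A) (coordReflection i B)

end Cube

section AdjacentFacets

variable {ay az bx bz z : ℝ}

lemma norm_vec_three (a b c : ℝ) : ‖![a, b, c]‖ = max |a| (max |b| |c|) := by
  refine le_antisymm ((pi_norm_le_iff_of_nonneg (by positivity)).2 fun k => ?_)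
    (max_le (norm_le_pi_norm ![a, b, c] 0)
      (max_le (norm_le_pi_norm ![a, b, c] 1) (norm_le_pi_norm ![a, b, c] 2)))
  fin_cases k <;> simp [Real.norm_eq_abs]

lemma norm_vec_three_sub (a b c a' b' c' : ℝ) :
    ‖![a, b, c] - ![a', b', c']‖ = max |a - a'| (max |b - b'| |c - c'|) :=
  norm_vec_three (a - a') (b - b') (c - c')

lemma vec_mem_cubeFacet_zero {a b s : ℝ} (hs : |s| = 1) (ha : a ∈ Icc (-1 : ℝ) 1)
    (hb : b ∈ Icc (-1 : ℝ) 1) : ![s, a, b] ∈ cubeFacet 0 s :=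
  ⟨by simpa [norm_vec_three, hs, abs_le] using ⟨ha, hb⟩, rfl⟩

lemma vec_mem_cubeFacet_one {a b s : ℝ} (hs : |s| = 1) (ha : a ∈ Icc (-1 : ℝ) 1)
    (hb : b ∈ Icc (-1 : ℝ) 1) : ![a, s, b] ∈ cubeFacet 1 s :=
  ⟨by simpa [norm_vec_three, hs, abs_le] using ⟨ha, hb⟩, rfl⟩

lemma vec_mem_cubeFacet_two {a b s : ℝ} (hs : |s| = 1) (ha : a ∈ Icc (-1 : ℝ) 1)
    (hb : b ∈ Icc (-1 : ℝ) 1) : ![a, b, s] ∈ cubeFacet 2 s :=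
  ⟨by simpa [norm_vec_three, hs, abs_le] using ⟨ha, hb⟩, rfl⟩

lemma geoDist_neg_one (a b c a' b' c' : ℝ) :
    geoDist ![a, -b, c] ![a', -b', c'] = geoDist ![a, b, c] ![a', b', c'] := by
  have hvec (a b c : ℝ) : coordReflection 1 ![a, b, c] = ![a, -b, c] := by
    ext k
    fin_cases k <;> simp [coordReflection_apply]
  rw [← hvec, ← hvec, geoDist_coordReflection]

lemma geoDist_neg_two (a b c a' b' c' : ℝ) :
    geoDist ![a, b, -c] ![a', b', -c'] = geoDist ![a, b, c] ![a', b', c'] := by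
  have hvec (a b c : ℝ) : coordReflection 2 ![a, b, c] = ![a, b, -c] := by
    ext k
    fin_cases k <;> simp [coordReflection_apply]
  rw [← hvec, ← hvec, geoDist_coordReflection]

lemma norm_sub_edge_point (hay : ay ≤ 1) (az z : ℝ) :
    ‖![1, ay, az] - ![1, 1, z]‖ = max (1 - ay) |az - z| := by
  rw [norm_vec_three_sub, sub_self, abs_zero, abs_sub_comm ay,
    abs_of_nonneg (sub_nonneg.2 hay), max_eq_right (le_max_of_le_right (abs_nonneg _))]

lemma norm_edge_point_sub (hbx : bx ≤ 1) (bz z : ℝ) :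
    ‖![1, 1, z] - ![bx, 1, bz]‖ = max (1 - bx) |z - bz| := by
  rw [norm_vec_three_sub, sub_self, abs_zero, abs_of_nonneg (sub_nonneg.2 hbx),
    max_eq_right (abs_nonneg (z - bz))]

lemma exists_mem_uIcc_max_add_max_eq {p q : ℝ} (hp : 0 ≤ p) (hq : 0 ≤ q) (a b : ℝ) :
    ∃ z ∈ uIcc a b, max p |a - z| + max q |z - b| = max (p + q) |a - b| := by
  rcases le_total a b with hab | hba
  · refine ⟨min (a + p) b, ?_, ?_⟩
    · rw [uIcc_of_le hab]
      grind
    · grind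
  · refine ⟨max (a - p) b, ?_, ?_⟩
    · rw [uIcc_of_ge hba]
      grind
    · grind

lemma geoDist_le_through_edge (hay : ay ∈ Icc (-1 : ℝ) 1) (haz : az ∈ Icc (-1 : ℝ) 1)
    (hbx : bx ∈ Icc (-1 : ℝ) 1) (hbz : bz ∈ Icc (-1 : ℝ) 1) (hz : z ∈ Icc (-1 : ℝ) 1) :
    geoDist ![1, ay, az] ![bx, 1, bz] ≤
      ENNReal.ofReal (‖![1, ay, az] - ![(1 : ℝ), 1, z]‖ + ‖![(1 : ℝ), 1, z] - ![bx, 1, bz]‖) := by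
  have hone : (1 : ℝ) ∈ Icc (-1 : ℝ) 1 := by norm_num
  rw [ENNReal.ofReal_add (norm_nonneg _) (norm_nonneg _),
    ← geoDist_eq_ofReal_norm_of_mem_cubeFacet abs_one (vec_mem_cubeFacet_zero abs_one hay haz)
      (vec_mem_cubeFacet_zero abs_one hone hz),
    ← geoDist_eq_ofReal_norm_of_mem_cubeFacet abs_one (vec_mem_cubeFacet_one abs_one hone hz)
      (vec_mem_cubeFacet_one abs_one hbx hbz)]
  exact geoDist_triangle _ _ _

lemma exists_edge_point_eq_geoDist_iff (hay : ay ∈ Icc (-1 : ℝ) 1) (haz : az ∈ Icc (-1 : ℝ) 1)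
    (hbx : bx ∈ Icc (-1 : ℝ) 1) (hbz : bz ∈ Icc (-1 : ℝ) 1) :
    (∃ z ∈ Icc (-1 : ℝ) 1,
        ENNReal.ofReal (‖![1, ay, az] - ![(1 : ℝ), 1, z]‖ + ‖![(1 : ℝ), 1, z] - ![bx, 1, bz]‖) =
          geoDist ![1, ay, az] ![bx, 1, bz]) ↔
      ENNReal.ofReal (2 - ay - bx) ≤ geoDist ![1, ay, az] ![bx, 1, bz] := by
  constructor
  · rintro ⟨z, -, hz⟩
    rw [← hz, norm_sub_edge_point hay.2, norm_edge_point_sub hbx.2]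
    refine ENNReal.ofReal_le_ofReal ?_
    linarith [le_max_left (1 - ay) |az - z|, le_max_left (1 - bx) |z - bz|]
  · intro hle
    obtain ⟨z, hz, hlength⟩ :=
      exists_mem_uIcc_max_add_max_eq (sub_nonneg.2 hay.2) (sub_nonneg.2 hbx.2) az bz
    have hz1 : z ∈ Icc (-1 : ℝ) 1 := ordConnected_Icc.uIcc_subset haz hbz hz
    refine ⟨z, hz1, le_antisymm ?_ (geoDist_le_through_edge hay haz hbx hbz hz1)⟩
    have hheight : ENNReal.ofReal |az - bz| ≤ geoDist ![1, ay, az] ![bx, 1, bz] := by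
      rw [← Real.dist_eq, ← edist_dist]
      exact (edist_le_pi_edist ![1, ay, az] ![bx, 1, bz] 2).trans (edist_le_geoDist _ _)
    rw [norm_sub_edge_point hay.2, norm_edge_point_sub hbx.2, hlength, ENNReal.ofReal_max,
      show 1 - ay + (1 - bx) = 2 - ay - bx by ring]
    exact max_le hle hheight

/- The route with corners `(1, ay + 1 - az, 1)` and `(bx + 1 - bz, 1, 1)` crosses the facets `x = 1`
and `y = 1` diagonally, so that it gains as much in `y`, respectively `x`, as it climbs in `z`. -/
lemma geoDist_le_through_top (hay : -1 ≤ ay) (haz : az ≤ 1) (hbx : -1 ≤ bx) (hbz : bz ≤ 1)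
    (h : ay ≤ az) (h' : bx ≤ bz) :
    geoDist ![1, ay, az] ![bx, 1, bz] ≤
      ENNReal.ofReal (2 - az - bz + max (az - ay) (bz - bx)) := by
  let P : Fin 3 → ℝ := ![1, ay + 1 - az, 1]
  let Q : Fin 3 → ℝ := ![bx + 1 - bz, 1, 1]
  have hone : (1 : ℝ) ∈ Icc (-1 : ℝ) 1 := by norm_num
  have hPy : ay + 1 - az ∈ Icc (-1 : ℝ) 1 := ⟨by linarith, by linarith⟩
  have hQx : bx + 1 - bz ∈ Icc (-1 : ℝ) 1 := ⟨by linarith, by linarith⟩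
  have hAP : geoDist ![1, ay, az] P = ENNReal.ofReal (1 - az) := by
    rw [geoDist_eq_ofReal_norm_of_mem_cubeFacet abs_one (vec_mem_cubeFacet_zero abs_one
      ⟨hay, by linarith⟩ ⟨by linarith, haz⟩) (vec_mem_cubeFacet_zero abs_one hPy hone),
      norm_vec_three_sub]
    congr 1
    grind
  have hPQ : geoDist P Q = ENNReal.ofReal (max (az - ay) (bz - bx)) := by
    rw [geoDist_eq_ofReal_norm_of_mem_cubeFacet abs_one
      (vec_mem_cubeFacet_two abs_one hone hPy) (vec_mem_cubeFacet_two abs_one hQx hone),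
      norm_vec_three_sub]
    congr 1
    grind
  have hQB : geoDist Q ![bx, 1, bz] = ENNReal.ofReal (1 - bz) := by
    rw [geoDist_eq_ofReal_norm_of_mem_cubeFacet abs_one (vec_mem_cubeFacet_one abs_one hQx hone)
      (vec_mem_cubeFacet_one abs_one ⟨hbx, by linarith⟩ ⟨by linarith, hbz⟩),
      norm_vec_three_sub]
    congr 1
    grind
  calc geoDist ![1, ay, az] ![bx, 1, bz]
      ≤ geoDist ![1, ay, az] P + geoDist P Q + geoDist Q ![bx, 1, bz] :=
        (geoDist_triangle _ Q _).trans (add_le_add (geoDist_triangle _ P _) le_rfl)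
    _ = ENNReal.ofReal (2 - az - bz + max (az - ay) (bz - bx)) := by
        rw [hAP, hPQ, hQB, ← ENNReal.ofReal_add, ← ENNReal.ofReal_add]
        · ring_nf
        all_goals grind

lemma geoDist_lt_of_lt_of_lt (hay : -1 ≤ ay) (haz : az ≤ 1) (hbx : -1 ≤ bx) (hbz : bz ≤ 1)
    (h : ay < az) (h' : bx < bz) :
    geoDist ![1, ay, az] ![bx, 1, bz] < ENNReal.ofReal (2 - ay - bx) := by
  refine (geoDist_le_through_top hay haz hbx hbz h.le h'.le).trans_lt
    ((ENNReal.ofReal_lt_ofReal_iff (by linarith)).2 ?_)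
  have hmax : max (az - ay) (bz - bx) < (az - ay) + (bz - bx) :=
    max_lt (by linarith) (by linarith)
  linarith

lemma two_sub_sub_le_geoDist_of_abs_le_left (hbx : bx ∈ Icc (-1 : ℝ) 1) (hbz : bz ∈ Icc (-1 : ℝ) 1)
    (h : |az| ≤ ay) : ENNReal.ofReal (2 - ay - bx) ≤ geoDist ![1, ay, az] ![bx, 1, bz] := by
  refine two_sub_apply_sub_apply_le_geoDist (i := 0) (j := 1) (by decide) rfl (fun k hk => ?_)
    (vec_mem_cubeFacet_one abs_one hbx hbz)
  fin_cases k
  · exact absurd rfl hk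
  · exact (abs_of_nonneg ((abs_nonneg az).trans h)).le
  · exact h

lemma two_sub_sub_le_geoDist_of_abs_le_right (hay : ay ∈ Icc (-1 : ℝ) 1) (haz : az ∈ Icc (-1 : ℝ) 1)
    (h : |bz| ≤ bx) : ENNReal.ofReal (2 - ay - bx) ≤ geoDist ![1, ay, az] ![bx, 1, bz] := by
  rw [geoDist_comm, sub_right_comm]
  refine two_sub_apply_sub_apply_le_geoDist (i := 1) (j := 0) (by decide) rfl (fun k hk => ?_)
    (vec_mem_cubeFacet_zero abs_one hay haz)
  fin_cases k
  · exact (abs_of_nonneg ((abs_nonneg bz).trans h)).le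
  · exact absurd rfl hk
  · exact h

lemma two_sub_sub_le_geoDist_of_abs_le_of_abs_le_neg (haz : az ≤ 1) (hbz : -1 ≤ bz)
    (h : |ay| ≤ az) (h' : |bx| ≤ -bz) :
    ENNReal.ofReal (2 - ay - bx) ≤ geoDist ![1, ay, az] ![bx, 1, bz] := by
  obtain ⟨hay₁, hay₂⟩ := abs_le.1 h
  obtain ⟨hbx₁, hbx₂⟩ := abs_le.1 h'
  have hA : ![1, -ay, az] ∈ cubeFacet 0 1 := vec_mem_cubeFacet_zero abs_one
    ⟨by linarith, by linarith⟩ ⟨by linarith, haz⟩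
  have hB : ![bx, -1, bz] ∈ cubeFacet 1 (-1) := vec_mem_cubeFacet_one (by simp)
    ⟨by linarith, by linarith⟩ ⟨hbz, by linarith⟩
  have hmin : ∀ k, ![1, -ay, az] 1 ≤ ![1, -ay, az] k := by
    intro k
    fin_cases k
    exacts [show -ay ≤ 1 by linarith, le_rfl, show -ay ≤ az by linarith]
  have hmax : ∀ k, ![bx, -1, bz] k ≤ ![bx, -1, bz] 0 := by
    intro k
    fin_cases k
    exacts [le_rfl, show -1 ≤ bx by linarith, show bz ≤ bx by linarith]
  rw [← geoDist_neg_one]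
  exact two_add_apply_sub_apply_le_geoDist hA hmin hB hmax

lemma lt_and_lt_or_lt_neg_and_lt_neg {R : Type*} [AddCommGroup R] [LinearOrder R]
    [IsOrderedAddMonoid R] {a b c d : R} (hab : a < |b|) (hcd : c < |d|)
    (hopp : |a| ≤ b → -d < |c|) (hopp' : |a| ≤ -b → d < |c|) :
    (a < b ∧ c < d) ∨ (a < -b ∧ c < -d) := by
  by_contra! ⟨hpos, hneg⟩
  rcases lt_abs.1 hab with h | h
  · have hd : d ≤ c := hpos h
    have hb : -b ≤ a := not_lt.1 fun h' => (hneg h').not_gt ((lt_abs.1 hcd).resolve_left hd.not_gt)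
    have hc : |c| ≤ -d := abs_le.2 ⟨by simpa using hd, ((lt_abs.1 hcd).resolve_left hd.not_gt).le⟩
    exact (hopp (abs_le.2 ⟨hb, h.le⟩)).not_ge hc
  · have hd : -d ≤ c := hneg h
    have hb : b ≤ a := not_lt.1 fun h' => (hpos h').not_gt ((lt_abs.1 hcd).resolve_right hd.not_gt)
    have hc : |c| ≤ d := abs_le.2 ⟨hd, ((lt_abs.1 hcd).resolve_right hd.not_gt).le⟩
    exact (hopp' (abs_le.2 ⟨by simpa using hb, h.le⟩)).not_ge hc

end AdjacentFacets

theorem statement5 (ay az bx bz : ℝ)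
    (hay : ay ∈ Icc (-1:ℝ) 1) (haz : az ∈ Icc (-1:ℝ) 1)
    (hbx : bx ∈ Icc (-1:ℝ) 1) (hbz : bz ∈ Icc (-1:ℝ) 1) :
    (∃ z ∈ Icc (-1:ℝ) 1,
        ENNReal.ofReal (‖![1, ay, az] - ![(1:ℝ), 1, z]‖ + ‖![(1:ℝ), 1, z] - ![bx, 1, bz]‖) =
          geoDist ![1, ay, az] ![bx, 1, bz]) ↔
      (|az| ≤ ay ∨ |bz| ≤ bx ∨ (|ay| ≤ az ∧ |bx| ≤ -bz) ∨
        (|ay| ≤ -az ∧ |bx| ≤ bz)) := by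
  rw [exists_edge_point_eq_geoDist_iff hay haz hbx hbz]
  constructor
  · contrapose!
    rintro ⟨h₁, h₂, h₃, h₄⟩
    rcases lt_and_lt_or_lt_neg_and_lt_neg h₁ h₂ h₃ h₄ with ⟨h, h'⟩ | ⟨h, h'⟩
    · exact geoDist_lt_of_lt_of_lt hay.1 haz.2 hbx.1 hbz.2 h h'
    · rw [← geoDist_neg_two]
      exact geoDist_lt_of_lt_of_lt hay.1 (neg_le.1 haz.1) hbx.1 (neg_le.1 hbz.1) h h'
  · rintro (h | h | ⟨h, h'⟩ | ⟨h, h'⟩)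
    · exact two_sub_sub_le_geoDist_of_abs_le_left hbx hbz h
    · exact two_sub_sub_le_geoDist_of_abs_le_right hay haz h
    · exact two_sub_sub_le_geoDist_of_abs_le_of_abs_le_neg haz.2 hbz.1 h h'
    · rw [← geoDist_neg_two]
      exact two_sub_sub_le_geoDist_of_abs_le_of_abs_le_neg (neg_le.1 haz.1) (neg_le_neg hbz.2) h
        (h'.trans_eq (neg_neg bz).symm)
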